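/- Let X be a compact metric space, g : X → X continuous, φ : X → ℝ continuous, K ⊆ X, and c̄ > 0. Suppose: (i) for every z ∈ K and every n ≥ 1 with gⁿ(z) ∈ K one has (1/n) S_n g(z) ≤ c̄; (ii) for every z ∈ X whose forward g-orbit visits K only finitely many times, limsup_{n→∞} (1/n) S_n g(z) ≤ 0. Then for every z ∈ X, liminf_{n→∞} (1/n) S_n g(z) ≤ c̄. -/

import Mathlib

open Filter

/-!
Let `m` be a time at which the orbit of `z` visits `K`. Every later visit, at time `n`, is a return
of `g^[m] z` to `K` after `n - m` steps, so `S_n g(z) ≤ S_m g(z) + c (n - m)`. If there are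
infinitely many visits, then dividing by `n` makes the constant `S_m g(z) - c m` disappear along
them, and the liminf is at most `c`.
-/

section Bounds

variable {X M : Type*} [AddCommMonoid M] [PartialOrder M] [IsOrderedAddMonoid M]
  {φ : X → M} {b : M}

lemma nsmul_le_birkhoffSum (g : X → X) (h : ∀ x, b ≤ φ x) (n : ℕ) (z : X) :
    n • b ≤ birkhoffSum g φ n z := by
  simpa [birkhoffSum] using
    Finset.card_nsmul_le_sum (Finset.range n) (fun k ↦ φ (g^[k] z)) b fun k _ ↦ h (g^[k] z)

lemma birkhoffSum_le_nsmul (g : X → X) (h : ∀ x, φ x ≤ b) (n : ℕ) (z : X) :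
    birkhoffSum g φ n z ≤ n • b :=
  nsmul_le_birkhoffSum (M := Mᵒᵈ) g h n z

end Bounds

section OrderedField

variable {X R : Type*} [Field R] [LinearOrder R] [IsStrictOrderedRing R] {φ : X → R}

lemma isBoundedUnder_ge_birkhoffSum_div (g : X → X) (h : BddBelow (Set.range φ)) (z : X) :
    IsBoundedUnder (· ≥ ·) atTop (fun n : ℕ ↦ birkhoffSum g φ n z / n) := by
  obtain ⟨b, hb⟩ := h
  refine isBoundedUnder_of_eventually_ge (a := b) ?_
  filter_upwards [eventually_gt_atTop 0] with n hn
  rw [le_div_iff₀' (Nat.cast_pos.2 hn), ← nsmul_eq_mul]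
  exact nsmul_le_birkhoffSum g (fun x ↦ hb ⟨x, rfl⟩) n z

lemma isBoundedUnder_le_birkhoffSum_div (g : X → X) (h : BddAbove (Set.range φ)) (z : X) :
    IsBoundedUnder (· ≤ ·) atTop (fun n : ℕ ↦ birkhoffSum g φ n z / n) := by
  obtain ⟨b, hb⟩ := h
  refine isBoundedUnder_of_eventually_le (a := b) ?_
  filter_upwards [eventually_gt_atTop 0] with n hn
  rw [div_le_iff₀' (Nat.cast_pos.2 hn), ← nsmul_eq_mul]
  exact birkhoffSum_le_nsmul g (fun x ↦ hb ⟨x, rfl⟩) n z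

lemma birkhoffSum_le_add_mul_of_mem_of_mem {g : X → X} {K : Set X} {c : R}
    (hret : ∀ z ∈ K, ∀ n : ℕ, 1 ≤ n → g^[n] z ∈ K → birkhoffSum g φ n z / n ≤ c)
    {z : X} {m n : ℕ} (hmn : m < n) (hm : g^[m] z ∈ K) (hn : g^[n] z ∈ K) :
    birkhoffSum g φ n z ≤ birkhoffSum g φ m z + c * (n - m) := by
  obtain ⟨k, rfl⟩ := Nat.exists_eq_add_of_le hmn.le
  have hk : 0 < k := by lia
  have hreturn : g^[k] (g^[m] z) ∈ K := by
    rwa [← Function.iterate_add_apply, add_comm]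
  have haverage : birkhoffSum g φ k (g^[m] z) ≤ c * k :=
    (div_le_iff₀ (Nat.cast_pos.2 hk)).1 (hret _ hm k hk hreturn)
  rw [birkhoffSum_add, Nat.cast_add, add_sub_cancel_left]
  gcongr

end OrderedField

lemma liminf_div_le_of_frequently_le_add_mul {s : ℕ → ℝ} {c d : ℝ}
    (hbdd : IsBoundedUnder (· ≥ ·) atTop (fun n : ℕ ↦ s n / n))
    (hs : ∃ᶠ n : ℕ in atTop, s n ≤ d + c * n) :
    liminf (fun n : ℕ ↦ s n / n) atTop ≤ c := by
  refine le_of_forall_pos_le_add fun ε hε ↦ liminf_le_of_frequently_le ?_ hbdd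
  have hd : ∀ᶠ n : ℕ in atTop, d / n ≤ ε :=
    (tendsto_const_div_atTop_nhds_zero_nat d).eventually_le_const hε
  refine (hs.and_eventually (hd.and (eventually_gt_atTop 0))).mono ?_
  rintro n ⟨hsn, hdn, hn⟩
  calc s n / n ≤ (d + c * n) / n := by gcongr
    _ = c + d / n := by
      rw [add_div, mul_div_cancel_right₀ c (Nat.cast_ne_zero.2 hn.ne'), add_comm]
    _ ≤ c + ε := by gcongr

section Returns

variable {X : Type*} {g : X → X} {φ : X → ℝ} {K : Set X} {c : ℝ}

lemma liminf_birkhoffSum_div_le_of_frequently_mem (hφ : BddBelow (Set.range φ))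
    (hret : ∀ z ∈ K, ∀ n : ℕ, 1 ≤ n → g^[n] z ∈ K → birkhoffSum g φ n z / n ≤ c)
    {z : X} (hz : ∃ᶠ n in atTop, g^[n] z ∈ K) :
    liminf (fun n : ℕ ↦ birkhoffSum g φ n z / n) atTop ≤ c := by
  obtain ⟨m, hm⟩ := hz.exists
  refine liminf_div_le_of_frequently_le_add_mul (d := birkhoffSum g φ m z - c * m)
    (isBoundedUnder_ge_birkhoffSum_div g hφ z) ?_
  refine (hz.and_eventually (eventually_gt_atTop m)).mono ?_
  rintro n ⟨hn, hmn⟩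
  linarith [birkhoffSum_le_add_mul_of_mem_of_mem hret hmn hm hn]

theorem liminf_birkhoff_average_le_general (hφ : Bornology.IsBounded (Set.range φ))
    (hret : ∀ z ∈ K, ∀ n : ℕ, 1 ≤ n → g^[n] z ∈ K → birkhoffSum g φ n z / n ≤ c)
    (hfin : ∀ z : X, {n : ℕ | g^[n] z ∈ K}.Finite →
      limsup (fun n : ℕ ↦ birkhoffSum g φ n z / n) atTop ≤ c) (z : X) :
    liminf (fun n : ℕ ↦ birkhoffSum g φ n z / n) atTop ≤ c := by
  by_cases hz : {n : ℕ | g^[n] z ∈ K}.Finite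
  · exact (liminf_le_limsup (isBoundedUnder_le_birkhoffSum_div g hφ.bddAbove z)
      (isBoundedUnder_ge_birkhoffSum_div g hφ.bddBelow z)).trans (hfin z hz)
  · exact liminf_birkhoffSum_div_le_of_frequently_mem hφ.bddBelow hret
      (Nat.frequently_atTop_iff_infinite.2 hz)

end Returns

/-- If every return of points of `K` to `K` has Birkhoff average at most
`c̄`, and points whose orbit visits `K` only finitely often have asymptotic average at
most `0`, then every point has `liminf` Birkhoff average at most `c̄`. -/
theorem liminf_birkhoff_average_le
    {X : Type*} [MetricSpace X] [CompactSpace X]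
    (g : X → X) (hg : Continuous g) (φ : X → ℝ) (hφ : Continuous φ)
    (K : Set X) (c : ℝ) (hc : 0 < c)
    (hret : ∀ z ∈ K, ∀ n : ℕ, 1 ≤ n → g^[n] z ∈ K → birkhoffSum g φ n z / n ≤ c)
    (hfin : ∀ z : X, {n : ℕ | g^[n] z ∈ K}.Finite →
      limsup (fun n : ℕ => birkhoffSum g φ n z / n) atTop ≤ 0) :
    ∀ z : X, liminf (fun n : ℕ => birkhoffSum g φ n z / n) atTop ≤ c :=
  liminf_birkhoff_average_le_general (isCompact_range hφ).isBounded hret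
    fun z hz ↦ (hfin z hz).trans hc.le
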